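/- Completeness of the labelled sequent calculus for CPL₀: if a labelled sequent ⊢ L is valid (that is, ⟦b⟧ ⊆ ⟦A⟧ when L = b ↣ A, respectively ⟦A⟧ ⊆ ⟦b⟧ when L = b ↢ A), then ⊢ L is derivable in the proof system for CPL₀. -/

import Mathlib

open MeasureTheory

/-- The Cantor space `2^ω` of infinite binary sequences. -/
abbrev Cantor : Type := ℕ → Bool

/-- Rational numbers in the unit interval `[0,1]`. -/
abbrev I01 : Type := (Set.Icc (0 : ℚ) 1)

/-- The value of a rational `q ∈ [0,1]` as an extended nonnegative real. -/
noncomputable def qq (q : I01) : ENNReal := ENNReal.ofReal (q.1 : ℝ)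

/-- `μ` is the fair-coin Bernoulli (uniform) product measure on the Cantor space:
it is a probability measure giving each cylinder fixing the values on a finite set `s`
of coordinates the measure `2^{-|s|}`. -/
def IsCantorMeasure (μ : Measure Cantor) : Prop :=
  IsProbabilityMeasure μ ∧
    ∀ (s : Finset ℕ) (v : ℕ → Bool),
      μ {f : Cantor | ∀ i ∈ s, f i = v i} = (2 : ENNReal)⁻¹ ^ s.card

/-- Boolean formulas `b ::= xᵢ | ⊤ | ⊥ | ¬b | b ∧ c | b ∨ c`. -/
inductive BF : Type where
  | var : ℕ → BF
  | tt : BF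
  | ff : BF
  | neg : BF → BF
  | conj : BF → BF → BF
  | disj : BF → BF → BF
deriving DecidableEq

/-- The interpretation `⟦b⟧ ⊆ 2^ω` of a Boolean formula. -/
def BF.sem : BF → Set Cantor
  | .var i => {f | f i = true}
  | .tt => Set.univ
  | .ff => ∅
  | .neg b => (BF.sem b)ᶜ
  | .conj b c => BF.sem b ∩ BF.sem c
  | .disj b c => BF.sem b ∪ BF.sem c

/-- Formulas of univariate counting propositional logic CPL₀:
`A ::= i | ¬A | A ∧ B | A ∨ B | C^q A | D^q A` with `q` a rational in `[0,1]`. -/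
inductive CPL0 : Type where
  | atom : ℕ → CPL0
  | neg : CPL0 → CPL0
  | conj : CPL0 → CPL0 → CPL0
  | disj : CPL0 → CPL0 → CPL0
  | cnt : I01 → CPL0 → CPL0
  | dnt : I01 → CPL0 → CPL0
deriving DecidableEq

open scoped Classical in
/-- The interpretation `⟦A⟧ ⊆ 2^ω` of a CPL₀ formula (relative to the measure `μ`). -/
noncomputable def CPL0.sem (μ : Measure Cantor) : CPL0 → Set Cantor
  | .atom i => {f | f i = true}
  | .neg A => (CPL0.sem μ A)ᶜ
  | .conj A B => CPL0.sem μ A ∩ CPL0.sem μ B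
  | .disj A B => CPL0.sem μ A ∪ CPL0.sem μ B
  | .cnt q A => if qq q ≤ μ (CPL0.sem μ A) then Set.univ else ∅
  | .dnt q A => if μ (CPL0.sem μ A) < qq q then Set.univ else ∅

/-- Labelled formulas: `b ↣ A` (`fwd`) and `b ↢ A` (`bwd`). -/
inductive LF : Type where
  | fwd : BF → CPL0 → LF
  | bwd : BF → CPL0 → LF
deriving DecidableEq

/-- Validity of a labelled formula: `b ↣ A` is valid when `⟦b⟧ ⊆ ⟦A⟧`,
and `b ↢ A` is valid when `⟦A⟧ ⊆ ⟦b⟧`. -/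
def LF.valid (μ : Measure Cantor) : LF → Prop
  | .fwd b A => BF.sem b ⊆ CPL0.sem μ A
  | .bwd b A => CPL0.sem μ A ⊆ BF.sem b

/-- The labelled, one-sided, single-succedent sequent calculus for CPL₀:
`Der μ L` means that the sequent `⊢ L` is derivable. -/
inductive Der (μ : Measure Cantor) : LF → Prop where
  | ax1 {b : BF} {n : ℕ} :
      BF.sem b ⊆ BF.sem (.var n) → Der μ (.fwd b (.atom n))
  | ax2 {b : BF} {n : ℕ} :
      BF.sem (.var n) ⊆ BF.sem b → Der μ (.bwd b (.atom n))
  | runion {b c d : BF} {A : CPL0} :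
      Der μ (.fwd c A) → Der μ (.fwd d A) →
      BF.sem b ⊆ BF.sem (.disj c d) → Der μ (.fwd b A)
  | rinter {b c d : BF} {A : CPL0} :
      Der μ (.bwd c A) → Der μ (.bwd d A) →
      BF.sem (.conj c d) ⊆ BF.sem b → Der μ (.bwd b A)
  | negF {b c : BF} {A : CPL0} :
      Der μ (.bwd c A) → BF.sem b ⊆ BF.sem (.neg c) → Der μ (.fwd b (.neg A))
  | negB {b c : BF} {A : CPL0} :
      Der μ (.fwd c A) → BF.sem (.neg c) ⊆ BF.sem b → Der μ (.bwd b (.neg A))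
  | disjF1 {b : BF} {A B : CPL0} :
      Der μ (.fwd b A) → Der μ (.fwd b (.disj A B))
  | disjF2 {b : BF} {A B : CPL0} :
      Der μ (.fwd b B) → Der μ (.fwd b (.disj A B))
  | disjB {b : BF} {A B : CPL0} :
      Der μ (.bwd b A) → Der μ (.bwd b B) → Der μ (.bwd b (.disj A B))
  | conjF {b : BF} {A B : CPL0} :
      Der μ (.fwd b A) → Der μ (.fwd b B) → Der μ (.fwd b (.conj A B))
  | conjB1 {b : BF} {A B : CPL0} :
      Der μ (.bwd b A) → Der μ (.bwd b (.conj A B))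
  | conjB2 {b : BF} {A B : CPL0} :
      Der μ (.bwd b B) → Der μ (.bwd b (.conj A B))
  | muF {b : BF} {A : CPL0} :
      μ (BF.sem b) = 0 → Der μ (.fwd b A)
  | muB {b : BF} {A : CPL0} :
      μ (BF.sem b) = 1 → Der μ (.bwd b A)
  | cntF {b c : BF} {q : I01} {A : CPL0} :
      Der μ (.fwd c A) → qq q ≤ μ (BF.sem c) → Der μ (.fwd b (.cnt q A))
  | cntB {b c : BF} {q : I01} {A : CPL0} :
      Der μ (.bwd c A) → μ (BF.sem c) < qq q → Der μ (.bwd b (.cnt q A))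
  | dntF {b c : BF} {q : I01} {A : CPL0} :
      Der μ (.bwd c A) → μ (BF.sem c) < qq q → Der μ (.fwd b (.dnt q A))
  | dntB {b c : BF} {q : I01} {A : CPL0} :
      Der μ (.fwd c A) → qq q ≤ μ (BF.sem c) → Der μ (.bwd b (.dnt q A))

theorem exists_label (μ : Measure Cantor) (hp : IsProbabilityMeasure μ) (A : CPL0) :
    ∃ e : BF, BF.sem e = CPL0.sem μ A ∧ Der μ (.fwd e A) ∧ Der μ (.bwd e A) := by
  induction A with
  | atom n => exact ⟨.var n, rfl, .ax1 subset_rfl, .ax2 subset_rfl⟩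
  | neg A ih =>
    obtain ⟨e, h, f, b⟩ := ih
    exact ⟨.neg e, by simp only [BF.sem, CPL0.sem, h], .negF b subset_rfl, .negB f subset_rfl⟩
  | conj A B ihA ihB =>
    obtain ⟨e, h, f, b⟩ := ihA
    obtain ⟨e', h', f', b'⟩ := ihB
    refine ⟨.conj e e', by simp only [BF.sem, CPL0.sem, h, h'], ?_, ?_⟩
    · refine .conjF (.runion f f ?_) (.runion f' f' ?_)
      · intro x hx; exact Or.inl hx.1
      · intro x hx; exact Or.inl hx.2
    · exact .rinter (.conjB1 b) (.conjB2 b') subset_rfl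
  | disj A B ihA ihB =>
    obtain ⟨e, h, f, b⟩ := ihA
    obtain ⟨e', h', f', b'⟩ := ihB
    refine ⟨.disj e e', by simp only [BF.sem, CPL0.sem, h, h'], ?_, ?_⟩
    · exact .runion (.disjF1 f) (.disjF2 f') subset_rfl
    · refine .disjB (.rinter b b ?_) (.rinter b' b' ?_)
      · intro x hx; exact Or.inl hx.1
      · intro x hx; exact Or.inr hx.1
  | cnt q A ih =>
    obtain ⟨e, h, f, b⟩ := ih
    by_cases hq : qq q ≤ μ (CPL0.sem μ A)
    · refine ⟨.tt, by simp [BF.sem, CPL0.sem, hq], .cntF f (by rw [h]; exact hq), .muB ?_⟩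
      simp [BF.sem]
    · refine ⟨.ff, by simp [BF.sem, CPL0.sem, hq], .muF ?_, .cntB b (by rw [h]; exact not_le.mp hq)⟩
      simp [BF.sem]
  | dnt q A ih =>
    obtain ⟨e, h, f, b⟩ := ih
    by_cases hq : μ (CPL0.sem μ A) < qq q
    · refine ⟨.tt, by simp [BF.sem, CPL0.sem, hq], .dntF b (by rw [h]; exact hq), .muB ?_⟩
      simp [BF.sem]
    · refine ⟨.ff, by simp [BF.sem, CPL0.sem, hq], .muF ?_, .dntB f (by rw [h]; exact not_lt.mp hq)⟩
      simp [BF.sem]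

/-- **Completeness.** If a labelled sequent `⊢ L` is valid
(`⟦b⟧ ⊆ ⟦A⟧` when `L = b ↣ A`, resp. `⟦A⟧ ⊆ ⟦b⟧` when `L = b ↢ A`), then `⊢ L` is
derivable in the proof system for CPL₀. -/
theorem cpl0_completeness
    (μ : Measure Cantor) (hμ : IsCantorMeasure μ) (L : LF) (h : L.valid μ) :
    Der μ L := by
  cases L with
  | fwd b A =>
    obtain ⟨e, he, f, _⟩ := exists_label μ hμ.1 A
    refine .runion f f fun x hx => Or.inl ?_
    rw [he]; exact h hx
  | bwd b A =>
    obtain ⟨e, he, _, g⟩ := exists_label μ hμ.1 A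
    refine .rinter g g fun x hx => h ?_
    rw [← he]; exact hx.1
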